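/- If G is a finite simple graph without isolated vertices, then γ_Zg(G) ≤ γ_g(G) ≤ γ_Lg(G) ≤ γ_LLg(G) ≤ min{2γ_t(G) − 1, n(G) + 1}, and likewise γ_Zg(G) ≤ γ_tg(G) ≤ γ_Lg(G). -/

import Mathlib

/-!
The two kinds of inequality have independent proofs.

*Comparing two games.*  Dominator plays the game on the left while imagining an optimally played
game on the right (`canEnd_of_simulation`).  Staller's real moves are copied into the imagined
game, Dominator's imagined moves are copied back, and the vertices covered in the imagined game
always stay covered in the real one.  If an imagined move of Dominator is illegal in the real game,
then some legal real move does at least as well: usually any move, but for the Z-game against the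
domination game it is a neighbor of the imagined vertex.

*Bounding the LL-game.*  For `2γ_t - 1`, Dominator plays the vertices of a minimum total dominating
set.  For `n + 1`, an inclusion-minimal isolate-free spanning subgraph of `G` is a forest of stars
with at least one edge each (`exists_starForest`).  Each star gets a weight (`starWeight`), equal to
its order at the start, which never increases during the game, and the total weight `W` bounds
the remaining play: Dominator can finish in `2m` moves if Staller is to play and `W ≤ 2m`, and in
`2m + 1` moves if Dominator is to play and `W ≤ 2m + 1`.  A legal move of Staller either lowers `W`
or leaves a star that Dominator can finish in one move, lowering `W` by two; and whenever `W` is odd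
some star of odd weight can be lowered by Dominator (`canEnd_ll_of_totalWeight`).
-/

/- Formalization of the domination games from "The variety of domination games".

A game is specified by a legality predicate `legal : List V → V → Prop`, where the list
records the previously played vertices (most recent first).  Players alternate moves;
each move must be legal; the game ends when no legal move exists.  Dominator wants to
minimize, Staller to maximize, the total number of moves.

`canEnd legal k turn h` states that, with history `h` and the player to move given by
`turn` (`true` = Dominator), Dominator can guarantee that at most `k` further moves are
played (against any play of Staller).  The value of the game under optimal play by both
players is then the least such `k` from the empty history. -/

/-- The closed neighborhood `N[v]` of a vertex. -/
def closedNbhd {V : Type*} (G : SimpleGraph V) (v : V) : Set V :=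
  insert v (G.neighborSet v)

/-- `⋃_{u ∈ h} N[u]` : the set of vertices dominated by the moves in `h`. -/
def dominatedBy {V : Type*} (G : SimpleGraph V) (h : List V) : Set V :=
  ⋃ u ∈ h, closedNbhd G u

/-- `⋃_{u ∈ h} N(u)` : the set of vertices totally dominated by the moves in `h`. -/
def totDominatedBy {V : Type*} (G : SimpleGraph V) (h : List V) : Set V :=
  ⋃ u ∈ h, G.neighborSet u

/-- Legality in the domination game: `N[v] \ ⋃_{j<i} N[v_j] ≠ ∅`. -/
def dgLegal {V : Type*} (G : SimpleGraph V) (h : List V) (v : V) : Prop :=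
  (closedNbhd G v \ dominatedBy G h).Nonempty

/-- Legality in the total domination game: `N(v) \ ⋃_{j<i} N(v_j) ≠ ∅`. -/
def tgLegal {V : Type*} (G : SimpleGraph V) (h : List V) (v : V) : Prop :=
  (G.neighborSet v \ totDominatedBy G h).Nonempty

/-- Legality in the Z-domination game on `G|A`: `N(v) \ (A ∪ ⋃_{j<i} N[v_j]) ≠ ∅`. -/
def zLegal {V : Type*} (G : SimpleGraph V) (A : Set V) (h : List V) (v : V) : Prop :=
  (G.neighborSet v \ (A ∪ dominatedBy G h)).Nonempty

/-- Legality in the LL-domination game on `G|A`: `N[v] \ (A ∪ ⋃_{j<i} N(v_j)) ≠ ∅`. -/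
def llLegal {V : Type*} (G : SimpleGraph V) (A : Set V) (h : List V) (v : V) : Prop :=
  (closedNbhd G v \ (A ∪ totDominatedBy G h)).Nonempty

/-- Legality in the L-domination game on `G|A`: as in the LL-game, and moreover no vertex
may be played twice. -/
def lLegal {V : Type*} (G : SimpleGraph V) (A : Set V) (h : List V) (v : V) : Prop :=
  llLegal G A h v ∧ v ∉ h

/-- `canEnd legal k turn h` : with previously played vertices `h` and the player to move
given by `turn` (`true` = Dominator, `false` = Staller), Dominator has a strategy
guaranteeing that at most `k` further moves are made. -/
def canEnd {V : Type*} (legal : List V → V → Prop) : ℕ → Bool → List V → Prop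
  | 0, _, h => ∀ v, ¬ legal h v
  | k+1, true, h => (∀ v, ¬ legal h v) ∨ ∃ v, legal h v ∧ canEnd legal k false (v :: h)
  | k+1, false, h => ∀ v, legal h v → canEnd legal k true (v :: h)

/-- The number of moves in the game with legality predicate `legal` when both players play
optimally (Dominator minimizing, Staller maximizing the number of moves); `dFirst = true`
means Dominator makes the first move. -/
noncomputable def gameVal {V : Type*} (legal : List V → V → Prop) (dFirst : Bool) : ℕ :=
  sInf {k | canEnd legal k dFirst []}

/-- The game Z-domination number `γ_Zg(G|A)` (Dominator starts). -/
noncomputable def gammaZgA {V : Type*} (G : SimpleGraph V) (A : Set V) : ℕ :=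
  gameVal (zLegal G A) true

/-- The Staller-start game Z-domination number `γ'_Zg(G|A)`. -/
noncomputable def gammaZgA' {V : Type*} (G : SimpleGraph V) (A : Set V) : ℕ :=
  gameVal (zLegal G A) false

/-- The game L-domination number `γ_Lg(G|A)` (Dominator starts). -/
noncomputable def gammaLgA {V : Type*} (G : SimpleGraph V) (A : Set V) : ℕ :=
  gameVal (lLegal G A) true

/-- The Staller-start game L-domination number `γ'_Lg(G|A)`. -/
noncomputable def gammaLgA' {V : Type*} (G : SimpleGraph V) (A : Set V) : ℕ :=
  gameVal (lLegal G A) false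

/-- The game LL-domination number `γ_LLg(G|A)` (Dominator starts). -/
noncomputable def gammaLLgA {V : Type*} (G : SimpleGraph V) (A : Set V) : ℕ :=
  gameVal (llLegal G A) true

/-- The Staller-start game LL-domination number `γ'_LLg(G|A)`. -/
noncomputable def gammaLLgA' {V : Type*} (G : SimpleGraph V) (A : Set V) : ℕ :=
  gameVal (llLegal G A) false

/-- The game domination number `γ_g(G)` (Dominator starts). -/
noncomputable def gammaG {V : Type*} (G : SimpleGraph V) : ℕ :=
  gameVal (dgLegal G) true

/-- The game total domination number `γ_tg(G)` (Dominator starts). -/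
noncomputable def gammaTg {V : Type*} (G : SimpleGraph V) : ℕ :=
  gameVal (tgLegal G) true

/-- The game Z-domination number `γ_Zg(G)` (Dominator starts). -/
noncomputable def gammaZg {V : Type*} (G : SimpleGraph V) : ℕ := gammaZgA G ∅

/-- The Staller-start game Z-domination number `γ'_Zg(G)`. -/
noncomputable def gammaZg' {V : Type*} (G : SimpleGraph V) : ℕ := gammaZgA' G ∅

/-- The game L-domination number `γ_Lg(G)` (Dominator starts). -/
noncomputable def gammaLg {V : Type*} (G : SimpleGraph V) : ℕ := gammaLgA G ∅

/-- The Staller-start game L-domination number `γ'_Lg(G)`. -/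
noncomputable def gammaLg' {V : Type*} (G : SimpleGraph V) : ℕ := gammaLgA' G ∅

/-- The game LL-domination number `γ_LLg(G)` (Dominator starts). -/
noncomputable def gammaLLg {V : Type*} (G : SimpleGraph V) : ℕ := gammaLLgA G ∅

/-- The Staller-start game LL-domination number `γ'_LLg(G)`. -/
noncomputable def gammaLLg' {V : Type*} (G : SimpleGraph V) : ℕ := gammaLLgA' G ∅

/-- `G` has no isolated vertices. -/
def isolateFree {V : Type*} (G : SimpleGraph V) : Prop := ∀ v : V, ∃ u, G.Adj v u

/-- The domination number `γ(G)`. -/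
noncomputable def domNum {V : Type*} (G : SimpleGraph V) : ℕ :=
  sInf {k | ∃ S : Finset V, S.card = k ∧ ∀ v : V, ∃ u ∈ S, v ∈ closedNbhd G u}

/-- The total domination number `γ_t(G)`. -/
noncomputable def totDomNum {V : Type*} (G : SimpleGraph V) : ℕ :=
  sInf {k | ∃ S : Finset V, S.card = k ∧ ∀ v : V, ∃ u ∈ S, G.Adj u v}

/-! ### Simulating one game in another -/

section Simulation

variable {V : Type*}

theorem canEnd_of_no_legal {legal : List V → V → Prop} {h : List V} (H : ∀ v, ¬ legal h v) :
    ∀ (k : ℕ) (t : Bool), canEnd legal k t h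
  | 0, _ => H
  | _ + 1, true => Or.inl H
  | _ + 1, false => fun v hv => absurd hv (H v)

/-- The imagination strategy.  The relation `R` links the history of the real game (`legal₁`) to
that of the imagined game (`legal₂`). -/
theorem canEnd_of_simulation {legal₁ legal₂ : List V → V → Prop} (R : List V → List V → Prop)
    (hS : ∀ h₁ h₂ v, R h₁ h₂ → legal₁ h₁ v → legal₂ h₂ v ∧ R (v :: h₁) (v :: h₂))
    (hD : ∀ h₁ h₂ v w, R h₁ h₂ → legal₂ h₂ v → legal₁ h₁ w →
      ∃ v', legal₁ h₁ v' ∧ R (v' :: h₁) (v :: h₂)) :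
    ∀ (k : ℕ) (t : Bool) (h₁ h₂ : List V), R h₁ h₂ → canEnd legal₂ k t h₂ →
      canEnd legal₁ k t h₁ := by
  intro k
  induction k with
  | zero =>
    intro t h₁ h₂ hR hc v hv
    exact hc v (hS _ _ _ hR hv).1
  | succ k ih =>
    intro t h₁ h₂ hR hc
    cases t with
    | false =>
      intro v hv
      obtain ⟨hv2, hRnext⟩ := hS _ _ _ hR hv
      exact ih _ _ _ hRnext (hc v hv2)
    | true =>
      by_cases hend : ∀ v, ¬ legal₁ h₁ v
      · exact Or.inl hend
      push Not at hend
      obtain ⟨w, hw⟩ := hend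
      rcases hc with hc | ⟨v, hv, hc⟩
      · exact absurd (hS _ _ _ hR hw).1 (hc w)
      · obtain ⟨v', hv', hRnext⟩ := hD _ _ _ _ hR hv hw
        exact Or.inr ⟨v', hv', ih _ _ _ hRnext hc⟩

/-- The hypothesis `hne` matters: the value of a game that Dominator could not end would be
`sInf ∅ = 0`. -/
theorem gameVal_le_of_canEnd {legal₁ legal₂ : List V → V → Prop} {t : Bool}
    (H : ∀ k, canEnd legal₂ k t [] → canEnd legal₁ k t [])
    (hne : ∃ k, canEnd legal₂ k t []) :
    gameVal legal₁ t ≤ gameVal legal₂ t :=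
  Nat.sInf_le (H _ (Nat.sInf_mem (s := {k | canEnd legal₂ k t []}) hne))

end Simulation

/-! ### The five games -/

section Games

variable {V : Type*} {G : SimpleGraph V}

theorem mem_closedNbhd {v x : V} : x ∈ closedNbhd G v ↔ x = v ∨ G.Adj v x := Iff.rfl

theorem mem_dominatedBy {h : List V} {x : V} :
    x ∈ dominatedBy G h ↔ ∃ u ∈ h, x = u ∨ G.Adj u x := by
  simp [dominatedBy, mem_closedNbhd]

theorem mem_totDominatedBy {h : List V} {x : V} :
    x ∈ totDominatedBy G h ↔ ∃ u ∈ h, G.Adj u x := by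
  simp [totDominatedBy]

theorem mem_dominatedBy_cons {h : List V} {v x : V} :
    x ∈ dominatedBy G (v :: h) ↔ (x = v ∨ G.Adj v x) ∨ x ∈ dominatedBy G h := by
  simp [mem_dominatedBy]

theorem mem_totDominatedBy_cons {h : List V} {v x : V} :
    x ∈ totDominatedBy G (v :: h) ↔ G.Adj v x ∨ x ∈ totDominatedBy G h := by
  simp [mem_totDominatedBy]

theorem subset_cons {h : List V} (v : V) : totDominatedBy G h ⊆ totDominatedBy G (v :: h) :=
  fun _ hy => mem_totDominatedBy_cons.2 (Or.inr hy)

theorem dgLegal_iff {h : List V} {v : V} :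
    dgLegal G h v ↔ ∃ x, (x = v ∨ G.Adj v x) ∧ x ∉ dominatedBy G h := Iff.rfl

theorem tgLegal_iff {h : List V} {v : V} :
    tgLegal G h v ↔ ∃ x, G.Adj v x ∧ x ∉ totDominatedBy G h := Iff.rfl

theorem zLegal_iff {h : List V} {v : V} :
    zLegal G ∅ h v ↔ ∃ x, G.Adj v x ∧ x ∉ dominatedBy G h := by
  simp [zLegal, Set.Nonempty]

theorem llLegal_iff {h : List V} {v : V} :
    llLegal G ∅ h v ↔ ∃ x, (x = v ∨ G.Adj v x) ∧ x ∉ totDominatedBy G h := by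
  simp [llLegal, Set.Nonempty, mem_closedNbhd]

/-- If Dominator's imagined move `v` only gains `v` itself, it is illegal in the Z-game; a neighbor
of `v` is then legal and dominates `v`. -/
theorem canEnd_z_of_dg (hG : isolateFree G) (k : ℕ) (h : canEnd (dgLegal G) k true []) :
    canEnd (zLegal G ∅) k true [] := by
  refine canEnd_of_simulation (fun h₁ h₂ => dominatedBy G h₂ ⊆ dominatedBy G h₁)
    ?_ ?_ k true [] [] subset_rfl h
  · intro h₁ h₂ v hR hv
    rw [zLegal_iff] at hv
    obtain ⟨x, hx, hxD⟩ := hv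
    refine ⟨dgLegal_iff.2 ⟨x, Or.inr hx, fun hh => hxD (hR hh)⟩, fun y hy => ?_⟩
    rw [mem_dominatedBy_cons] at hy ⊢
    exact hy.imp_right (@hR y)
  · intro h₁ h₂ v w hR hv hw
    by_cases hl : zLegal G ∅ h₁ v
    · refine ⟨v, hl, fun y hy => ?_⟩
      rw [mem_dominatedBy_cons] at hy ⊢
      exact hy.imp_right (@hR y)
    · have hN : ∀ x, G.Adj v x → x ∈ dominatedBy G h₁ := by
        intro x hx
        by_contra hxD
        exact hl (zLegal_iff.2 ⟨x, hx, hxD⟩)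
      by_cases hvD : v ∈ dominatedBy G h₁
      · refine ⟨w, hw, fun y hy => ?_⟩
        rw [mem_dominatedBy_cons] at hy ⊢
        rcases hy with (rfl | hy) | hy
        · exact Or.inr hvD
        · exact Or.inr (hN _ hy)
        · exact Or.inr (hR hy)
      · obtain ⟨u, hu⟩ := hG v
        refine ⟨u, zLegal_iff.2 ⟨v, hu.symm, hvD⟩, fun y hy => ?_⟩
        rw [mem_dominatedBy_cons] at hy ⊢
        rcases hy with (rfl | hy) | hy
        · exact Or.inl (Or.inr hu.symm)
        · exact Or.inr (hN _ hy)
        · exact Or.inr (hR hy)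

/-- The invariant keeps whole closed neighborhoods of the imagined moves dominated in the real
game, so that Staller never makes a real move whose copy would be a repetition. -/
theorem canEnd_dg_of_l (k : ℕ) (h : canEnd (lLegal G ∅) k true []) :
    canEnd (dgLegal G) k true [] := by
  refine canEnd_of_simulation (fun h₁ h₂ => dominatedBy G h₂ ⊆ dominatedBy G h₁)
    ?_ ?_ k true [] [] subset_rfl h
  · intro h₁ h₂ v hR hv
    obtain ⟨x, hx, hxD⟩ := dgLegal_iff.1 hv
    refine ⟨⟨llLegal_iff.2 ⟨x, hx, fun hh => hxD (hR ?_)⟩, fun hvh => hxD (hR ?_)⟩,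
      fun y hy => ?_⟩
    · obtain ⟨u, hu, hux⟩ := mem_totDominatedBy.1 hh
      exact mem_dominatedBy.2 ⟨u, hu, Or.inr hux⟩
    · exact mem_dominatedBy.2 ⟨v, hvh, hx⟩
    · rw [mem_dominatedBy_cons] at hy ⊢
      exact hy.imp_right (@hR y)
  · intro h₁ h₂ v w hR hv hw
    by_cases hl : dgLegal G h₁ v
    · refine ⟨v, hl, fun y hy => ?_⟩
      rw [mem_dominatedBy_cons] at hy ⊢
      exact hy.imp_right (@hR y)
    · refine ⟨w, hw, fun y hy => ?_⟩
      rw [mem_dominatedBy_cons] at hy ⊢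
      rcases hy with hy | hy
      · right
        by_contra hyD
        exact hl (dgLegal_iff.2 ⟨y, hy, hyD⟩)
      · exact Or.inr (hR hy)

theorem canEnd_z_of_tg (k : ℕ) (h : canEnd (tgLegal G) k true []) :
    canEnd (zLegal G ∅) k true [] := by
  refine canEnd_of_simulation (fun h₁ h₂ => totDominatedBy G h₂ ⊆ dominatedBy G h₁)
    ?_ ?_ k true [] [] (fun y hy => by simp [mem_totDominatedBy] at hy) h
  · intro h₁ h₂ v hR hv
    obtain ⟨x, hx, hxD⟩ := zLegal_iff.1 hv
    refine ⟨tgLegal_iff.2 ⟨x, hx, fun hh => hxD (hR hh)⟩, fun y hy => ?_⟩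
    rw [mem_totDominatedBy_cons] at hy
    rw [mem_dominatedBy_cons]
    exact hy.imp Or.inr (@hR y)
  · intro h₁ h₂ v w hR hv hw
    by_cases hl : zLegal G ∅ h₁ v
    · refine ⟨v, hl, fun y hy => ?_⟩
      rw [mem_totDominatedBy_cons] at hy
      rw [mem_dominatedBy_cons]
      exact hy.imp Or.inr (@hR y)
    · refine ⟨w, hw, fun y hy => ?_⟩
      rw [mem_totDominatedBy_cons] at hy
      rw [mem_dominatedBy_cons]
      rcases hy with hy | hy
      · right
        by_contra hyD
        exact hl (zLegal_iff.2 ⟨y, hy, hyD⟩)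
      · exact Or.inr (hR hy)

theorem canEnd_tg_of_l (k : ℕ) (h : canEnd (lLegal G ∅) k true []) :
    canEnd (tgLegal G) k true [] := by
  refine canEnd_of_simulation (fun h₁ h₂ => totDominatedBy G h₂ ⊆ totDominatedBy G h₁)
    ?_ ?_ k true [] [] subset_rfl h
  · intro h₁ h₂ v hR hv
    obtain ⟨x, hx, hxD⟩ := tgLegal_iff.1 hv
    refine ⟨⟨llLegal_iff.2 ⟨x, Or.inr hx, fun hh => hxD (hR hh)⟩,
      fun hvh => hxD (hR (mem_totDominatedBy.2 ⟨v, hvh, hx⟩))⟩, fun y hy => ?_⟩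
    rw [mem_totDominatedBy_cons] at hy ⊢
    exact hy.imp_right (@hR y)
  · intro h₁ h₂ v w hR hv hw
    by_cases hl : tgLegal G h₁ v
    · refine ⟨v, hl, fun y hy => ?_⟩
      rw [mem_totDominatedBy_cons] at hy ⊢
      exact hy.imp_right (@hR y)
    · refine ⟨w, hw, fun y hy => ?_⟩
      rw [mem_totDominatedBy_cons] at hy ⊢
      rcases hy with hy | hy
      · right
        by_contra hyD
        exact hl (tgLegal_iff.2 ⟨y, hy, hyD⟩)
      · exact Or.inr (hR hy)

theorem canEnd_l_of_ll (k : ℕ) (h : canEnd (llLegal G ∅) k true []) :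
    canEnd (lLegal G ∅) k true [] := by
  refine canEnd_of_simulation (fun h₁ h₂ => totDominatedBy G h₂ ⊆ totDominatedBy G h₁)
    ?_ ?_ k true [] [] subset_rfl h
  · intro h₁ h₂ v hR hv
    obtain ⟨x, hx, hxD⟩ := llLegal_iff.1 hv.1
    refine ⟨llLegal_iff.2 ⟨x, hx, fun hh => hxD (hR hh)⟩, fun y hy => ?_⟩
    rw [mem_totDominatedBy_cons] at hy ⊢
    exact hy.imp_right (@hR y)
  · intro h₁ h₂ v w hR hv hw
    by_cases hl : lLegal G ∅ h₁ v
    · refine ⟨v, hl, fun y hy => ?_⟩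
      rw [mem_totDominatedBy_cons] at hy ⊢
      exact hy.imp_right (@hR y)
    · refine ⟨w, hw, fun y hy => ?_⟩
      rw [mem_totDominatedBy_cons] at hy ⊢
      rcases hy with hy | hy
      · right
        by_contra hyD
        -- a repetition is no loss for Dominator: `N(v)` is already totally dominated
        exact hl ⟨llLegal_iff.2 ⟨y, Or.inr hy, hyD⟩,
          fun hvh => hyD (mem_totDominatedBy.2 ⟨v, hvh, hy⟩)⟩
      · exact Or.inr (hR hy)

/-! ### The bound by the total domination number -/

theorem not_llLegal_of_forall_mem {h : List V} (H : ∀ v, v ∈ totDominatedBy G h) (v : V) :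
    ¬ llLegal G ∅ h v := by
  rw [llLegal_iff]
  rintro ⟨x, -, hx⟩
  exact hx (H x)

/-- It suffices that Dominator can still play the vertices of a set `T` totally dominating
everything that is not totally dominated yet. -/
theorem canEnd_ll_of_totDom [DecidableEq V] (m : ℕ) : ∀ (T : Finset V) (h : List V),
    T.card ≤ m + 1 → (∀ v, v ∈ totDominatedBy G h ∨ ∃ u ∈ T, G.Adj u v) →
    canEnd (llLegal G ∅) (2 * m + 1) true h := by
  induction m with
  | zero =>
    intro T h hT hcov
    by_cases hleg : ∃ a ∈ T, llLegal G ∅ h a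
    · obtain ⟨a, haT, ha⟩ := hleg
      refine Or.inr ⟨a, ha, canEnd_of_no_legal (not_llLegal_of_forall_mem fun v => ?_) _ _⟩
      rw [mem_totDominatedBy_cons]
      rcases hcov v with hv | ⟨u, hu, huv⟩
      · exact Or.inr hv
      · rw [Finset.card_le_one.1 hT u hu a haT] at huv
        exact Or.inl huv
    · refine canEnd_of_no_legal (not_llLegal_of_forall_mem fun v => ?_) _ _
      rcases hcov v with hv | ⟨u, hu, huv⟩
      · exact hv
      · by_contra hvD
        exact hleg ⟨u, hu, llLegal_iff.2 ⟨v, Or.inr huv, hvD⟩⟩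
  | succ m ih =>
    intro T h hT hcov
    by_cases hleg : ∃ a ∈ T, llLegal G ∅ h a
    · obtain ⟨a, haT, ha⟩ := hleg
      refine Or.inr ⟨a, ha, fun v _ => ih (T.erase a) _ ?_ fun y => ?_⟩
      · rw [Finset.card_erase_of_mem haT]; omega
      · rw [mem_totDominatedBy_cons, mem_totDominatedBy_cons]
        rcases hcov y with hy | ⟨u, hu, huy⟩
        · exact Or.inl (Or.inr (Or.inr hy))
        · by_cases hua : u = a
          · subst hua; exact Or.inl (Or.inr (Or.inl huy))
          · exact Or.inr ⟨u, Finset.mem_erase.2 ⟨hua, hu⟩, huy⟩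
    · refine canEnd_of_no_legal (not_llLegal_of_forall_mem fun v => ?_) _ _
      rcases hcov v with hv | ⟨u, hu, huv⟩
      · exact hv
      · by_contra hvD
        exact hleg ⟨u, hu, llLegal_iff.2 ⟨v, Or.inr huv, hvD⟩⟩

theorem canEnd_ll_totDomNum [Fintype V] (hG : isolateFree G) :
    canEnd (llLegal G ∅) (2 * totDomNum G - 1) true [] := by
  classical
  obtain ⟨S, hS, hdom⟩ : totDomNum G ∈
      {k | ∃ S : Finset V, S.card = k ∧ ∀ v : V, ∃ u ∈ S, G.Adj u v} :=
    Nat.sInf_mem ⟨_, Finset.univ, rfl, fun v =>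
      (hG v).imp fun u hu => ⟨Finset.mem_univ _, hu.symm⟩⟩
  rcases isEmpty_or_nonempty V with hV | ⟨⟨v₀⟩⟩
  · exact canEnd_of_no_legal (fun v => isEmptyElim v) _ _
  · have hpos : 0 < totDomNum G := by
      obtain ⟨u, hu, -⟩ := hdom v₀
      rw [← hS]
      exact Finset.card_pos.2 ⟨u, hu⟩
    have := canEnd_ll_of_totDom (G := G) (totDomNum G - 1) S [] (by omega)
      (fun v => Or.inr (hdom v))
    rwa [show 2 * (totDomNum G - 1) + 1 = 2 * totDomNum G - 1 by omega] at this

/-! ### Spanning star forests -/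

/-- A spanning star forest of `G` without trivial stars, encoded by the map `c` sending each
vertex to the center of its star; the centers are the fixed points of `c`. -/
structure IsStarForest (G : SimpleGraph V) (c : V → V) : Prop where
  center_center : ∀ v, c (c v) = c v
  adj : ∀ v, c v ≠ v → G.Adj v (c v)
  exists_leaf : ∀ x, c x = x → ∃ u, u ≠ x ∧ c u = x

/-- In a minimal isolate-free spanning subgraph, no edge has both ends of degree at least two. -/
theorem exists_minimal_isolateFree [Finite V] (hG : isolateFree G) :
    ∃ H ≤ G, isolateFree H ∧ ∀ u v, H.Adj u v →
      (∀ w, H.Adj u w → w = v) ∨ (∀ w, H.Adj v w → w = u) := by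
  obtain ⟨H, hHG, hmin⟩ := exists_minimal_le_of_wellFoundedLT (isolateFree (V := V)) G hG
  refine ⟨H, hHG, hmin.prop, fun u v huv => ?_⟩
  by_contra! hcon
  obtain ⟨⟨a, ha, hav⟩, ⟨b, hb, hbu⟩⟩ := hcon
  -- otherwise the edge `uv` could be deleted
  have hle : H.deleteEdges {s(u, v)} ≤ H := SimpleGraph.deleteEdges_le _
  have hiso : isolateFree (H.deleteEdges {s(u, v)}) := by
    intro x
    by_cases hxu : x = u
    · subst hxu
      refine ⟨a, ?_⟩
      simp only [SimpleGraph.deleteEdges_adj, Set.mem_singleton_iff, Sym2.eq_iff]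
      exact ⟨ha, by grind⟩
    by_cases hxv : x = v
    · subst hxv
      refine ⟨b, ?_⟩
      simp only [SimpleGraph.deleteEdges_adj, Set.mem_singleton_iff, Sym2.eq_iff]
      exact ⟨hb, by grind⟩
    obtain ⟨y, hy⟩ := hmin.prop x
    refine ⟨y, ?_⟩
    simp only [SimpleGraph.deleteEdges_adj, Set.mem_singleton_iff, Sym2.eq_iff]
    exact ⟨hy, by grind⟩
  have := hmin.le_of_le hiso hle huv
  simp [SimpleGraph.deleteEdges_adj] at this

theorem exists_starForest [Fintype V] (hG : isolateFree G) : ∃ c : V → V, IsStarForest G c := by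
  classical
  obtain ⟨H, hHG, hH, hmin⟩ := exists_minimal_isolateFree hG
  choose p hp using hH
  let e := Fintype.equivFin V
  -- in each edge of `H` the end with the larger key is the center of the star: this is the end
  -- of degree at least two if there is one, and an arbitrary end of an isolated edge
  let key : V → ℕ := fun v => (if ∃ u, H.Adj v u ∧ u ≠ p v then Fintype.card V else 0) + e v
  have hbig : ∀ u v, H.Adj u v → (∃ w, H.Adj u w ∧ w ≠ v) → key v < key u := by
    rintro u v huv ⟨w, hw, hwv⟩
    have hv : ∀ z, H.Adj v z → z = u := (hmin u v huv).resolve_left fun h => hwv (h w hw)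
    have hu : ∃ z, H.Adj u z ∧ z ≠ p u := by
      by_cases hpv : p u = v
      · exact ⟨w, hw, hpv ▸ hwv⟩
      · exact ⟨v, huv, Ne.symm hpv⟩
    have hv' : ¬ ∃ z, H.Adj v z ∧ z ≠ p v := by
      rintro ⟨z, hz, hzp⟩
      exact hzp ((hv z hz).trans (hv _ (hp v)).symm)
    have := (e v).isLt
    simp only [key, if_pos hu, if_neg hv']
    omega
  have hinj : ∀ u v, H.Adj u v → p u = v → p v = u → key u ≠ key v := by
    intro u v huv hu hv heq
    by_cases h1 : ∃ w, H.Adj u w ∧ w ≠ v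
    · exact absurd (hbig u v huv h1) (by omega)
    by_cases h2 : ∃ w, H.Adj v w ∧ w ≠ u
    · exact absurd (hbig v u huv.symm h2) (by omega)
    simp only [key, hu, hv, if_neg h1, if_neg h2] at heq
    have : e u = e v := Fin.ext (by omega)
    exact huv.ne (e.injective this)
  refine ⟨fun v => if key v < key (p v) then p v else v, ⟨fun v => ?_, fun v hv => ?_,
    fun x hx => ?_⟩⟩
  · by_cases hlt : key v < key (p v)
    · simp only [if_pos hlt]
      rw [if_neg]
      by_cases hpp : p (p v) = v
      · rw [hpp]; omega
      · have := hbig (p v) (p (p v)) (hp _) ⟨v, (hp v).symm, Ne.symm hpp⟩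
        omega
    · simp only [if_neg hlt]
  · by_cases hlt : key v < key (p v)
    · simp only [if_pos hlt]; exact hHG (hp v)
    · simp [if_neg hlt] at hv
  · have hlt : ¬ key x < key (p x) := by
      intro hlt
      simp only [if_pos hlt] at hx
      exact (hp x).ne hx.symm
    refine ⟨p x, (hp x).ne', ?_⟩
    by_cases hpp : p (p x) = x
    · have := hinj x (p x) (hp x) rfl hpp
      simp only [hpp]
      rw [if_pos (by omega)]
    · have := hbig (p x) x (hp x).symm ⟨p (p x), hp _, hpp⟩
      omega

/-! ### The bound by the order of the graph -/

/-- The number of leaves of the star centered at `x` that lie outside `D`. -/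
noncomputable def openLeaves [Fintype V] (c : V → V) (D : Set V) (x : V) : ℕ :=
  {v | v ≠ x ∧ c v = x ∧ v ∉ D}.ncard

open Classical in
/-- The weight of the star centered at `x` when `D` is the set of totally dominated vertices.  A
star inside `D` has weight `0`, a star that Dominator can finish in one move has weight `2`, and
any other star has as its weight the number of its vertices outside `D`. -/
noncomputable def starWeight [Fintype V] (c : V → V) (D : Set V) (x : V) : ℕ :=
  if x ∈ D then 2 * min 1 (openLeaves c D x) else 1 + max 1 (openLeaves c D x)

open Classical in
/-- The sum of the weights of all stars, that is, over all fixed points of `c`. -/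
noncomputable def totalWeight [Fintype V] (c : V → V) (D : Set V) : ℕ :=
  ∑ x with c x = x, starWeight c D x

/-- Dominator can finish the star centered at `x` by one move. -/
def Finishable [Fintype V] (c : V → V) (D : Set V) (x : V) : Prop :=
  (x ∈ D ∧ 0 < openLeaves c D x) ∨ (x ∉ D ∧ openLeaves c D x = 0)

section Weight

variable [Fintype V] {c : V → V} {D D' : Set V} {x : V}

theorem openLeaves_pos_iff : 0 < openLeaves c D x ↔ ∃ v, v ≠ x ∧ c v = x ∧ v ∉ D :=
  Set.ncard_pos (Set.toFinite _)

theorem openLeaves_anti (h : D ⊆ D') : openLeaves c D' x ≤ openLeaves c D x :=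
  Set.ncard_le_ncard (fun _ hv => ⟨hv.1, hv.2.1, fun hD => hv.2.2 (h hD)⟩) (Set.toFinite _)

theorem openLeaves_lt (h : D ⊆ D') {v : V} (hvx : v ≠ x) (hc : c v = x) (hv : v ∉ D)
    (hv' : v ∈ D') : openLeaves c D' x < openLeaves c D x :=
  Set.ncard_lt_ncard
    ⟨fun _ hw => ⟨hw.1, hw.2.1, fun hD => hw.2.2 (h hD)⟩,
      fun hs => (hs ⟨hvx, hc, hv⟩ : v ≠ x ∧ c v = x ∧ v ∉ D').2.2 hv'⟩ (Set.toFinite _)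

theorem starWeight_anti (h : D ⊆ D') (x : V) : starWeight c D' x ≤ starWeight c D x := by
  have := openLeaves_anti (c := c) (x := x) h
  have hx := @h x
  unfold starWeight
  split_ifs <;> first | omega | tauto

/-- Since no star gains weight, a loss of `k` in one star is a loss of at least `k` in total. -/
theorem totalWeight_add_le (h : D ⊆ D') (hx : c x = x) {k : ℕ}
    (hk : starWeight c D' x + k ≤ starWeight c D x) : totalWeight c D' + k ≤ totalWeight c D := by
  classical
  have hxm : x ∈ Finset.univ.filter (fun x => c x = x) := by simpa using hx
  unfold totalWeight
  rw [← Finset.add_sum_erase _ _ hxm, ← Finset.add_sum_erase _ _ hxm]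
  have := Finset.sum_le_sum fun y (_ : y ∈ (Finset.univ.filter (fun x => c x = x)).erase x) =>
    starWeight_anti (c := c) h y
  omega

theorem totalWeight_anti (h : D ⊆ D') : totalWeight c D' ≤ totalWeight c D :=
  Finset.sum_le_sum fun y _ => starWeight_anti h y

theorem totalWeight_empty_le (hc : IsStarForest G c) : totalWeight c ∅ ≤ Fintype.card V := by
  classical
  rw [← Finset.card_univ, Finset.card_eq_sum_card_fiberwise (f := c)
    (t := Finset.univ.filter (fun x => c x = x)) (fun v _ => by simpa using hc.center_center v)]
  refine Finset.sum_le_sum fun x hx => ?_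
  have hx : c x = x := by simpa using hx
  have hxm : x ∈ Finset.univ.filter (fun v => c v = x) := by simpa using hx
  have hcard : openLeaves c ∅ x = ((Finset.univ.filter (fun v => c v = x)).erase x).card := by
    unfold openLeaves
    rw [← Set.ncard_coe_finset]
    congr 1
    ext v
    simp [and_comm]
  have hpos : 0 < openLeaves c ∅ x := by
    obtain ⟨u, hu, hux⟩ := hc.exists_leaf x hx
    exact openLeaves_pos_iff.2 ⟨u, hu, hux, id⟩
  rw [Finset.card_erase_of_mem hxm] at hcard
  simp only [starWeight, Set.mem_empty_iff_false, if_false]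
  omega

theorem mem_of_totalWeight_eq_zero (hc : IsStarForest G c) (h : totalWeight c D = 0) (v : V) :
    v ∈ D := by
  classical
  have hw : starWeight c D (c v) = 0 := by
    unfold totalWeight at h
    exact (Finset.sum_eq_zero_iff.1 h) (c v) (by simpa using hc.center_center v)
  unfold starWeight at hw
  split_ifs at hw with hcv
  · by_cases hvc : v = c v
    · rwa [hvc]
    · by_contra hv
      have := openLeaves_pos_iff.2 ⟨v, hvc, rfl, hv⟩
      omega
  · omega

theorem openLeaves_cons_center (hc : IsStarForest G c) (h : List V) (x : V) :
    openLeaves c (totDominatedBy G (x :: h)) x = 0 := by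
  by_contra hne
  obtain ⟨v, hvx, hv, hvD⟩ := openLeaves_pos_iff.1 (Nat.pos_of_ne_zero hne)
  refine hvD (mem_totDominatedBy_cons.2 (Or.inl ?_))
  have := hc.adj v (by rw [hv]; exact hvx.symm)
  rw [hv] at this
  exact this.symm

theorem exists_move_of_finishable (hc : IsStarForest G c) {h : List V} (hx : c x = x)
    (hfin : Finishable c (totDominatedBy G h) x) :
    ∃ v, llLegal G ∅ h v ∧
      totalWeight c (totDominatedBy G (v :: h)) + 2 ≤ totalWeight c (totDominatedBy G h) := by
  rcases hfin with ⟨hxD, hpos⟩ | ⟨hxD, hzero⟩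
  · obtain ⟨u, hux, hu, huD⟩ := openLeaves_pos_iff.1 hpos
    have hadj := hc.adj u (by rw [hu]; exact hux.symm)
    rw [hu] at hadj
    refine ⟨x, llLegal_iff.2 ⟨u, Or.inr hadj.symm, huD⟩, totalWeight_add_le (subset_cons x) hx ?_⟩
    have h0 := openLeaves_cons_center hc h x
    unfold starWeight
    rw [if_pos hxD, if_pos (subset_cons x hxD), h0]
    omega
  · obtain ⟨u, hux, hu⟩ := hc.exists_leaf x hx
    have hadj := hc.adj u (by rw [hu]; exact hux.symm)
    rw [hu] at hadj
    refine ⟨u, llLegal_iff.2 ⟨x, Or.inr hadj, hxD⟩, totalWeight_add_le (subset_cons u) hx ?_⟩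
    have h0 := openLeaves_anti (c := c) (x := x) (subset_cons (G := G) (h := h) u)
    unfold starWeight
    rw [if_neg hxD, if_pos (mem_totDominatedBy_cons.2 (Or.inl hadj))]
    omega

/-- A star of odd weight has an open center and at least two open leaves, so playing its center
lowers its weight to at most two. -/
theorem exists_move_of_odd (hc : IsStarForest G c) {h : List V}
    (hodd : Odd (totalWeight c (totDominatedBy G h))) :
    ∃ v, llLegal G ∅ h v ∧
      totalWeight c (totDominatedBy G (v :: h)) + 1 ≤ totalWeight c (totDominatedBy G h) := by
  classical
  obtain ⟨x, hx, hxodd⟩ : ∃ x, c x = x ∧ Odd (starWeight c (totDominatedBy G h) x) := by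
    by_contra! hcon
    refine Nat.not_even_iff_odd.2 hodd (Finset.even_sum _ fun x hx => ?_)
    exact Nat.not_odd_iff_even.1 (hcon x (by simpa using hx))
  by_cases hxD : x ∈ totDominatedBy G h
  · rw [starWeight, if_pos hxD] at hxodd
    exact absurd hxodd (Nat.not_odd_iff_even.2 (even_two_mul _))
  · refine ⟨x, llLegal_iff.2 ⟨x, Or.inl rfl, hxD⟩, totalWeight_add_le (subset_cons x) hx ?_⟩
    obtain ⟨r, hr⟩ := hxodd
    have h0 := openLeaves_cons_center hc h x
    rw [starWeight, if_neg hxD] at hr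
    simp only [starWeight, if_neg hxD, h0]
    split_ifs <;> omega

/-- For `y ∈ N(v)` the star of `y` is affected; if its weight is unchanged, its center and
its leaves are not both still open.  For `y = v` the closed neighborhood of `v` is totally
dominated except for `v`. -/
theorem totalWeight_lt_or_finishable (hc : IsStarForest G c) {h : List V} {v : V}
    (hv : llLegal G ∅ h v) :
    totalWeight c (totDominatedBy G (v :: h)) + 1 ≤ totalWeight c (totDominatedBy G h) ∨
      ∃ x, c x = x ∧ Finishable c (totDominatedBy G (v :: h)) x := by
  obtain ⟨y, hy, hyD⟩ := llLegal_iff.1 hv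
  have hsub := subset_cons (G := G) (h := h) v
  rcases hy with rfl | hvy
  · have hyD' : y ∉ totDominatedBy G (y :: h) := by
      rw [mem_totDominatedBy_cons]
      simp [hyD]
    refine Or.inr ⟨c y, hc.center_center y, ?_⟩
    by_cases hcy : c y = y
    · rw [hcy]
      exact Or.inr ⟨hyD', openLeaves_cons_center hc h y⟩
    · exact Or.inl ⟨mem_totDominatedBy_cons.2 (Or.inl (hc.adj y hcy)),
        openLeaves_pos_iff.2 ⟨y, Ne.symm hcy, rfl, hyD'⟩⟩
  · have hyD' : y ∈ totDominatedBy G (v :: h) := mem_totDominatedBy_cons.2 (Or.inl hvy)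
    by_cases hlt : starWeight c (totDominatedBy G (v :: h)) (c y) + 1 ≤
        starWeight c (totDominatedBy G h) (c y)
    · exact Or.inl (totalWeight_add_le hsub (hc.center_center y) hlt)
    refine Or.inr ⟨c y, hc.center_center y, ?_⟩
    unfold starWeight at hlt
    unfold Finishable
    by_cases hcy : c y = y
    · rw [hcy] at hlt ⊢
      rw [if_pos hyD', if_neg hyD] at hlt
      exact Or.inl ⟨hyD', by omega⟩
    · have hleaf := openLeaves_lt hsub (Ne.symm hcy) rfl hyD hyD'
      have hmem := @hsub (c y)
      split_ifs at hlt with h1 h2 h2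
      · exact Or.inl ⟨h1, by omega⟩
      · exact Or.inl ⟨h1, by omega⟩
      · exact absurd (hmem h2) h1
      · exact Or.inr ⟨h1, by omega⟩

theorem canEnd_ll_dominator (hc : IsStarForest G c) {m : ℕ}
    (hm : ∀ h : List V, totalWeight c (totDominatedBy G h) ≤ 2 * m →
      canEnd (llLegal G ∅) (2 * m) false h)
    (h : List V) (hW : totalWeight c (totDominatedBy G h) ≤ 2 * m + 1) :
    canEnd (llLegal G ∅) (2 * m + 1) true h := by
  by_cases hW' : totalWeight c (totDominatedBy G h) ≤ 2 * m
  · by_cases hend : ∀ v, ¬ llLegal G ∅ h v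
    · exact Or.inl hend
    · push Not at hend
      obtain ⟨v, hv⟩ := hend
      exact Or.inr ⟨v, hv, hm _ ((totalWeight_anti (subset_cons v)).trans hW')⟩
  · obtain ⟨v, hv, hlt⟩ := exists_move_of_odd hc (h := h) ⟨m, by omega⟩
    exact Or.inr ⟨v, hv, hm _ (by omega)⟩

theorem canEnd_ll_of_totalWeight (hc : IsStarForest G c) (m : ℕ) : ∀ h : List V,
    totalWeight c (totDominatedBy G h) ≤ 2 * m → canEnd (llLegal G ∅) (2 * m) false h := by
  induction m with
  | zero =>
    intro h hW
    exact canEnd_of_no_legal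
      (not_llLegal_of_forall_mem (mem_of_totalWeight_eq_zero hc (by omega))) _ _
  | succ m ih =>
    intro h hW v hv
    rcases totalWeight_lt_or_finishable hc hv with hlt | ⟨x, hx, hfin⟩
    · exact canEnd_ll_dominator hc ih _ (by omega)
    · obtain ⟨w, hw, hlt⟩ := exists_move_of_finishable hc hx hfin
      have := totalWeight_anti (c := c) (subset_cons (G := G) (h := h) v)
      exact Or.inr ⟨w, hw, ih _ (by omega)⟩

end Weight

theorem gammaLLg_le_card_add_one [Fintype V] (hG : isolateFree G) :
    gammaLLg G ≤ Fintype.card V + 1 := by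
  obtain ⟨c, hc⟩ := exists_starForest hG
  have hW := totalWeight_empty_le hc
  have h0 : totDominatedBy G [] = ∅ := by simp [totDominatedBy]
  have : canEnd (llLegal G ∅) (2 * (Fintype.card V / 2) + 1) true [] :=
    canEnd_ll_dominator hc (canEnd_ll_of_totalWeight hc _) [] (by rw [h0]; omega)
  have hle : gammaLLg G ≤ 2 * (Fintype.card V / 2) + 1 := Nat.sInf_le this
  omega

end Games

/-- The hierarchy of the five domination games, rounded off with the upper bound
`min{2γ_t(G) − 1, n(G) + 1}`. -/
theorem games_hierarchy {V : Type*} [Fintype V] (G : SimpleGraph V)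
    (hG : isolateFree G) :
    gammaZg G ≤ gammaG G ∧ gammaG G ≤ gammaLg G ∧ gammaLg G ≤ gammaLLg G ∧
      gammaLLg G ≤ min (2 * totDomNum G - 1) (Fintype.card V + 1) ∧
      gammaZg G ≤ gammaTg G ∧ gammaTg G ≤ gammaLg G := by
  have hll : ∃ k, canEnd (llLegal G ∅) k true [] := ⟨_, canEnd_ll_totDomNum hG⟩
  have hl : ∃ k, canEnd (lLegal G ∅) k true [] := hll.imp canEnd_l_of_ll
  have hg : ∃ k, canEnd (dgLegal G) k true [] := hl.imp canEnd_dg_of_l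
  have ht : ∃ k, canEnd (tgLegal G) k true [] := hl.imp canEnd_tg_of_l
  exact ⟨gameVal_le_of_canEnd (canEnd_z_of_dg hG) hg, gameVal_le_of_canEnd canEnd_dg_of_l hl,
    gameVal_le_of_canEnd canEnd_l_of_ll hll,
    le_min (Nat.sInf_le (canEnd_ll_totDomNum hG)) (gammaLLg_le_card_add_one hG),
    gameVal_le_of_canEnd canEnd_z_of_tg ht, gameVal_le_of_canEnd canEnd_tg_of_l hl⟩
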